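/- arXiv:2006.10201 — 5 statements merged into one kernel-verified Lean document; each statement's English description precedes it below -/
import Mathlib

section
/- Fix b₀ ≠ 0 and σ² > 0. The function ℓ(b,c) = (1/2)·((b − b₀)² + (b₀c − 1)² + c² + 1)·σ² on ℝ² attains its global minimum at the unique point (b, c) = (b₀, b₀/(b₀² + 1)); that is, ℓ(b,c) ≥ ℓ(b₀, b₀/(b₀²+1)) for all (b,c), with equality only at that point. Moreover both coordinates of this minimizer are nonzero, i.e., the unconstrained least squares solution corresponds to a cyclic graph. -/
/-!
Completing the square gives
`ℓ(b, c) = ℓ(b₀, c₀) + (σ² / 2) · ((b - b₀)² + (b₀² + 1) · (c - c₀)²)` with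
`c₀ = b₀ / (b₀² + 1)`. The second summand is nonnegative and vanishes only at `(b₀, c₀)`.
-/

/-- The least squares objective `ℓ(b,c) = (1/2)·((b − b₀)² + (b₀c − 1)² + c² + 1)·σ²`
attains its global minimum at the unique point `(b₀, b₀/(b₀² + 1))`, and both
coordinates of this minimizer are nonzero (a cyclic graph). -/
theorem least_squares_unique_global_min_cyclic
    (b₀ σ2 : ℝ) (hb₀ : b₀ ≠ 0) (hσ2 : 0 < σ2) :
    (∀ b c : ℝ,
        (1 / 2) * ((b - b₀) ^ 2 + (b₀ * c - 1) ^ 2 + c ^ 2 + 1) * σ2 ≥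
        (1 / 2) * ((b₀ - b₀) ^ 2 + (b₀ * (b₀ / (b₀ ^ 2 + 1)) - 1) ^ 2 +
          (b₀ / (b₀ ^ 2 + 1)) ^ 2 + 1) * σ2) ∧
    (∀ b c : ℝ,
        (1 / 2) * ((b - b₀) ^ 2 + (b₀ * c - 1) ^ 2 + c ^ 2 + 1) * σ2 =
        (1 / 2) * ((b₀ - b₀) ^ 2 + (b₀ * (b₀ / (b₀ ^ 2 + 1)) - 1) ^ 2 +
          (b₀ / (b₀ ^ 2 + 1)) ^ 2 + 1) * σ2 →
        b = b₀ ∧ c = b₀ / (b₀ ^ 2 + 1)) ∧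
    b₀ ≠ 0 ∧ b₀ / (b₀ ^ 2 + 1) ≠ 0 := by
  have hd : 0 < b₀ ^ 2 + 1 := by positivity
  -- Completing the square in `c` around its stationary value `b₀ / (b₀² + 1)`.
  have key : ∀ b c : ℝ,
      (1 / 2) * ((b - b₀) ^ 2 + (b₀ * c - 1) ^ 2 + c ^ 2 + 1) * σ2 =
      (1 / 2) * ((b₀ - b₀) ^ 2 + (b₀ * (b₀ / (b₀ ^ 2 + 1)) - 1) ^ 2 +
          (b₀ / (b₀ ^ 2 + 1)) ^ 2 + 1) * σ2 +
        (1 / 2) * ((b - b₀) ^ 2 + (b₀ ^ 2 + 1) * (c - b₀ / (b₀ ^ 2 + 1)) ^ 2) * σ2 := by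
    intro b c
    field_simp
    ring
  refine ⟨fun b c => ?_, fun b c h => ?_, hb₀, div_ne_zero hb₀ hd.ne'⟩
  · rw [key b c]
    exact le_add_of_nonneg_right (by positivity)
  · rw [key b c, add_eq_left] at h
    have h1 : (b - b₀) ^ 2 + (b₀ ^ 2 + 1) * (c - b₀ / (b₀ ^ 2 + 1)) ^ 2 = 0 := by
      simpa [hσ2.ne'] using h
    rw [add_eq_zero_iff_of_nonneg (by positivity) (by positivity)] at h1
    obtain ⟨hb, hc⟩ := h1
    exact ⟨sub_eq_zero.mp (pow_eq_zero_iff two_ne_zero |>.mp hb),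
      sub_eq_zero.mp (pow_eq_zero_iff two_ne_zero |>.mp
        ((mul_eq_zero.mp hc).resolve_left hd.ne'))⟩
end

section
/- Fix b₀ ≠ 0 and σ² > 0. Among all (b, c) ∈ ℝ² with bc = 0 (i.e., such that B(b,c) is acyclic), the least squares objective ℓ(b,c) = (1/2)·((b − b₀)² + (b₀c − 1)² + c² + 1)·σ² satisfies ℓ(b,c) ≥ σ², with equality if and only if (b, c) = (b₀, 0). In particular, min over c of ℓ(0,c) equals (1/2)·(b₀² + 1 + 1/(b₀²+1))·σ², which is strictly greater than σ² = ℓ(b₀, 0). -/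
/-!
The constraint `b * c = 0` leaves two lines. On `c = 0` the bracket is `(b - b₀)² + 2`, which is at
least `2` with equality only at `b = b₀`. On `b = 0`, completing the square in `c`
(`reversed_edge_complete_square`) gives the minimum `t + 1 / t` with `t = b₀² + 1 > 1`, attained at
`c = b₀ / t`; it exceeds `2` because `t + 1 / t - 2 = (t - 1)² / t` (`two_lt_reversed_edge_min`).
-/

lemma reversed_edge_complete_square (b₀ c : ℝ) :
    (0 - b₀) ^ 2 + (b₀ * c - 1) ^ 2 + c ^ 2 + 1 =
      b₀ ^ 2 + 1 + 1 / (b₀ ^ 2 + 1) + (b₀ ^ 2 + 1) * (c - b₀ / (b₀ ^ 2 + 1)) ^ 2 := by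
  have ht : b₀ ^ 2 + 1 ≠ 0 := by positivity
  field_simp
  ring

lemma two_lt_reversed_edge_min {b₀ : ℝ} (hb₀ : b₀ ≠ 0) :
    2 < b₀ ^ 2 + 1 + 1 / (b₀ ^ 2 + 1) := by
  have key : b₀ ^ 2 + 1 + 1 / (b₀ ^ 2 + 1) - 2 = (b₀ ^ 2) ^ 2 / (b₀ ^ 2 + 1) := by
    field_simp
    ring
  have hpos : 0 < (b₀ ^ 2) ^ 2 / (b₀ ^ 2 + 1) := by positivity
  linarith

lemma reversed_edge_min_le (b₀ c : ℝ) :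
    b₀ ^ 2 + 1 + 1 / (b₀ ^ 2 + 1) ≤ (0 - b₀) ^ 2 + (b₀ * c - 1) ^ 2 + c ^ 2 + 1 := by
  have hsq : 0 ≤ (b₀ ^ 2 + 1) * (c - b₀ / (b₀ ^ 2 + 1)) ^ 2 := by positivity
  rw [reversed_edge_complete_square]
  linarith

/-- Among all `(b, c)` with `bc = 0` (acyclic graphs), the least squares objective
`ℓ(b,c) = (1/2)·((b − b₀)² + (b₀c − 1)² + c² + 1)·σ²` is at least `σ²`, with
equality iff `(b, c) = (b₀, 0)`. Moreover the minimum over `c` of `ℓ(0, c)` is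
`(1/2)·(b₀² + 1 + 1/(b₀²+1))·σ²`, which is strictly greater than `σ² = ℓ(b₀, 0)`. -/
theorem least_squares_hard_dag_constraint
    (b₀ σ2 : ℝ) (hb₀ : b₀ ≠ 0) (hσ2 : 0 < σ2) :
    (∀ b c : ℝ, b * c = 0 →
        (1 / 2) * ((b - b₀) ^ 2 + (b₀ * c - 1) ^ 2 + c ^ 2 + 1) * σ2 ≥ σ2) ∧
    (∀ b c : ℝ, b * c = 0 →
        ((1 / 2) * ((b - b₀) ^ 2 + (b₀ * c - 1) ^ 2 + c ^ 2 + 1) * σ2 = σ2 ↔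
          b = b₀ ∧ c = 0)) ∧
    IsLeast
      (Set.range fun c : ℝ =>
        (1 / 2) * ((0 - b₀) ^ 2 + (b₀ * c - 1) ^ 2 + c ^ 2 + 1) * σ2)
      ((1 / 2) * (b₀ ^ 2 + 1 + 1 / (b₀ ^ 2 + 1)) * σ2) ∧
    (1 / 2) * (b₀ ^ 2 + 1 + 1 / (b₀ ^ 2 + 1)) * σ2 > σ2 ∧
    (1 / 2) * ((b₀ - b₀) ^ 2 + (b₀ * 0 - 1) ^ 2 + (0 : ℝ) ^ 2 + 1) * σ2 = σ2 := by
  have hmin := two_lt_reversed_edge_min hb₀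
  refine ⟨?_, ?_, ⟨⟨b₀ / (b₀ ^ 2 + 1), ?_⟩, ?_⟩, ?_, ?_⟩
  · intro b c hbc
    have h2 : 2 ≤ (b - b₀) ^ 2 + (b₀ * c - 1) ^ 2 + c ^ 2 + 1 := by
      rcases mul_eq_zero.mp hbc with rfl | rfl
      · linarith [reversed_edge_min_le b₀ c]
      · nlinarith [sq_nonneg (b - b₀)]
    nlinarith
  · intro b c hbc
    constructor
    · intro h
      have h2 : (b - b₀) ^ 2 + (b₀ * c - 1) ^ 2 + c ^ 2 + 1 = 2 := by
        apply mul_right_cancel₀ hσ2.ne'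
        linarith
      rcases mul_eq_zero.mp hbc with rfl | rfl
      · linarith [reversed_edge_min_le b₀ c]
      · have h0 : (b - b₀) ^ 2 = 0 := by linarith
        exact ⟨sub_eq_zero.mp (pow_eq_zero_iff two_ne_zero |>.mp h0), rfl⟩
    · rintro ⟨rfl, rfl⟩
      ring
  · beta_reduce
    rw [reversed_edge_complete_square]
    ring
  · rintro _ ⟨c, rfl⟩
    have hle := reversed_edge_min_le b₀ c
    beta_reduce
    gcongr
  · nlinarith
  · ring
end

section
/- Fix b₀ ≠ 0 and define f(b,c) = log((b − b₀)² + (b₀c − 1)² + c² + 1) − log |1 − bc| on the open set {(b,c) ∈ ℝ² : bc ≠ 1}. Then the gradient of f vanishes at (b,c) if and only if (b,c) is one of the three points (b₀, 0), ((b₀² + 2)/b₀, 2/b₀), and (−2/b₀, 2/b₀). Equivalently, the system 2(b − b₀)/((b − b₀)² + (b₀c − 1)² + c² + 1) + c/(1 − bc) = 0 and (2b₀(b₀c − 1) + 2c)/((b − b₀)² + (b₀c − 1)² + c² + 1) + b/(1 − bc) = 0 has exactly these three solutions. -/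
/-!
Write `Q = (b - b₀)² + (b₀c - 1)² + c² + 1 > 0`. After clearing denominators the system reads
`E₁ : 2(b - b₀)(1 - bc) + cQ = 0` and `E₂ : 2(b₀(b₀c - 1) + c)(1 - bc) + bQ = 0`.
The combination `b E₁ - c E₂` is divisible by `1 - bc ≠ 0`, which leaves the conic
`R : b(b - b₀) = c((b₀² + 1)c - b₀)`. Modulo `R`, equation `E₁` factors as
`(2 - b₀c)(b - b₀ + c) = 0`. On the line `b₀c = 2` the conic `R` splits as
`(b₀b + 2)(b₀b - b₀² - 2) = 0`; on the line `b = b₀ - c` it reduces to `b₀²c² = 0`.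
These are the three points (`likelihood_ev_system_iff`). The two left-hand sides of the original
system are the partial derivatives of the objective (`likelihood_ev_hasFDerivAt`), so the
gradient vanishes exactly when the system holds.
-/

theorem likelihood_ev_quad_pos (b₀ b c : ℝ) :
    0 < (b - b₀) ^ 2 + (b₀ * c - 1) ^ 2 + c ^ 2 + 1 := by positivity

theorem likelihood_ev_system_iff (b₀ : ℝ) (hb₀ : b₀ ≠ 0) (b c : ℝ) (hbc : b * c ≠ 1) :
    (2 * (b - b₀) / ((b - b₀) ^ 2 + (b₀ * c - 1) ^ 2 + c ^ 2 + 1) +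
            c / (1 - b * c) = 0 ∧
          (2 * b₀ * (b₀ * c - 1) + 2 * c) /
              ((b - b₀) ^ 2 + (b₀ * c - 1) ^ 2 + c ^ 2 + 1) +
            b / (1 - b * c) = 0
        ↔ (b, c) = (b₀, 0) ∨ (b, c) = ((b₀ ^ 2 + 2) / b₀, 2 / b₀) ∨
            (b, c) = (-2 / b₀, 2 / b₀)) := by
  have hQ := (likelihood_ev_quad_pos b₀ b c).ne'
  have hm : 1 - b * c ≠ 0 := sub_ne_zero.mpr hbc.symm
  rw [div_add_div _ _ hQ hm, div_add_div _ _ hQ hm, div_eq_zero_iff, div_eq_zero_iff,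
    or_iff_left (mul_ne_zero hQ hm), or_iff_left (mul_ne_zero hQ hm)]
  simp only [Prod.mk.injEq]
  constructor
  · rintro ⟨h1, h2⟩
    have hR : b * (b - b₀) - c * ((b₀ ^ 2 + 1) * c - b₀) = 0 := by
      refine (mul_eq_zero.mp ?_).resolve_left hm
      linear_combination (b * h1 - c * h2) / 2
    have hS : (2 - b₀ * c) * (b - b₀ + c) = 0 := by
      linear_combination h1 + c * hR
    rcases mul_eq_zero.mp hS with h | h
    · have hc : c = 2 / b₀ := by
        rw [eq_div_iff hb₀]; linear_combination -h
      have hF : (b₀ * b + 2) * (b₀ * b - b₀ ^ 2 - 2) = 0 := by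
        linear_combination b₀ ^ 2 * hR - ((b₀ ^ 2 + 1) * (b₀ * c + 2) - b₀ ^ 2) * h
      rcases mul_eq_zero.mp hF with h' | h'
      · refine Or.inr (Or.inr ⟨?_, hc⟩)
        rw [eq_div_iff hb₀]; linear_combination h'
      · refine Or.inr (Or.inl ⟨?_, hc⟩)
        rw [eq_div_iff hb₀]; linear_combination h'
    · have hb : b = b₀ - c := by linear_combination h
      subst hb
      have h3 : (b₀ * c) ^ 2 = 0 := by linear_combination -hR
      have hc : c = 0 := (mul_eq_zero.mp (pow_eq_zero_iff two_ne_zero |>.mp h3)).resolve_left hb₀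
      exact Or.inl ⟨by rw [hc, sub_zero], hc⟩
  · rintro (⟨rfl, rfl⟩ | ⟨rfl, rfl⟩ | ⟨rfl, rfl⟩)
    · constructor <;> ring
    · constructor <;> field_simp <;> ring
    · constructor <;> field_simp <;> ring

theorem likelihood_ev_hasFDerivAt (b₀ b c : ℝ) (hbc : b * c ≠ 1) :
    HasFDerivAt
      (fun p : ℝ × ℝ =>
        Real.log ((p.1 - b₀) ^ 2 + (b₀ * p.2 - 1) ^ 2 + p.2 ^ 2 + 1) -
          Real.log |1 - p.1 * p.2|)
      ((2 * (b - b₀) / ((b - b₀) ^ 2 + (b₀ * c - 1) ^ 2 + c ^ 2 + 1) +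
            c / (1 - b * c)) • ContinuousLinearMap.fst ℝ ℝ ℝ +
        ((2 * b₀ * (b₀ * c - 1) + 2 * c) /
              ((b - b₀) ^ 2 + (b₀ * c - 1) ^ 2 + c ^ 2 + 1) +
            b / (1 - b * c)) • ContinuousLinearMap.snd ℝ ℝ ℝ) (b, c) := by
  have hQ := (likelihood_ev_quad_pos b₀ b c).ne'
  have hm : 1 - b * c ≠ 0 := sub_ne_zero.mpr hbc.symm
  -- `Real.log` is even, so the absolute value can be dropped.
  simp only [Real.log_abs]
  have h1 : HasFDerivAt (fun p : ℝ × ℝ => p.1) (ContinuousLinearMap.fst ℝ ℝ ℝ) (b, c) :=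
    hasFDerivAt_fst
  have h2 : HasFDerivAt (fun p : ℝ × ℝ => p.2) (ContinuousLinearMap.snd ℝ ℝ ℝ) (b, c) :=
    hasFDerivAt_snd
  have hlogQ := (((((h1.sub_const b₀).pow 2).add (((h2.const_mul b₀).sub_const 1).pow 2)).add
    (h2.pow 2)).add_const 1).log hQ
  have hlogm := ((h1.mul h2).const_sub 1).log hm
  refine (hlogQ.sub hlogm).congr_fderiv ?_
  ext <;> simp <;> field_simp

/-- Stationary points of the bivariate likelihood-EV objective
`f(b,c) = log((b − b₀)² + (b₀c − 1)² + c² + 1) − log |1 − bc|` on `{bc ≠ 1}`: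
the gradient of `f` vanishes at `(b,c)` iff `(b,c)` is one of the three points
`(b₀, 0)`, `((b₀² + 2)/b₀, 2/b₀)`, `(−2/b₀, 2/b₀)`; equivalently, the stated
system of two equations has exactly these three solutions. -/
theorem likelihood_ev_stationary_points
    (b₀ : ℝ) (hb₀ : b₀ ≠ 0) :
    ∀ b c : ℝ, b * c ≠ 1 →
      (fderiv ℝ
          (fun p : ℝ × ℝ =>
            Real.log ((p.1 - b₀) ^ 2 + (b₀ * p.2 - 1) ^ 2 + p.2 ^ 2 + 1) -
              Real.log |1 - p.1 * p.2|) (b, c) = 0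
        ↔ (b, c) = (b₀, 0) ∨ (b, c) = ((b₀ ^ 2 + 2) / b₀, 2 / b₀) ∨
            (b, c) = (-2 / b₀, 2 / b₀)) ∧
      (2 * (b - b₀) / ((b - b₀) ^ 2 + (b₀ * c - 1) ^ 2 + c ^ 2 + 1) +
            c / (1 - b * c) = 0 ∧
          (2 * b₀ * (b₀ * c - 1) + 2 * c) /
              ((b - b₀) ^ 2 + (b₀ * c - 1) ^ 2 + c ^ 2 + 1) +
            b / (1 - b * c) = 0
        ↔ (b, c) = (b₀, 0) ∨ (b, c) = ((b₀ ^ 2 + 2) / b₀, 2 / b₀) ∨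
            (b, c) = (-2 / b₀, 2 / b₀)) := by
  intro b c hbc
  refine ⟨?_, likelihood_ev_system_iff b₀ hb₀ b c hbc⟩
  rw [← likelihood_ev_system_iff b₀ hb₀ b c hbc, (likelihood_ev_hasFDerivAt b₀ b c hbc).fderiv]
  constructor
  · intro h
    -- The partial derivatives are the values of the differential at the standard basis vectors.
    have e1 := congrArg (fun L : ℝ × ℝ →L[ℝ] ℝ => L (1, 0)) h
    have e2 := congrArg (fun L : ℝ × ℝ →L[ℝ] ℝ => L (0, 1)) h
    exact ⟨by simpa using e1, by simpa using e2⟩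
  · rintro ⟨e1, e2⟩
    rw [e1, e2, zero_smul, zero_smul, add_zero]
end

section
/- Fix b₀ ≠ 0 and define f(b,c) = log((b − b₀)² + (b₀c − 1)² + c² + 1) − log |1 − bc| on {(b,c) : bc ≠ 1}. Then (b₀, 0) is a local minimizer of f, and ((b₀² + 2)/b₀, 2/b₀) is a local minimizer of f. -/
/-!
Write `N = (b − b₀)² + (b₀c − 1)² + c² + 1`. Two sum-of-squares identities,
`N − 2(1 − bc) = (b − b₀ + c)² + (b₀c)²` and `N + 2(1 − bc) = (b − b₀ − c)² + (b₀c − 2)²`,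
give `N ≥ 2|1 − bc|`, so the objective is at least `log 2` wherever `bc ≠ 1`. Both points attain
`log 2` (each is the zero of one of the two sums of squares), and `bc ≠ 1` near each of them.
-/

/-- The lower bound `log 2`; it needs `b * c ≠ 1`, since `Real.log 0 = 0` in Lean. -/
lemma log_two_le_objective (b₀ b c : ℝ) (h : 1 - b * c ≠ 0) :
    Real.log 2 ≤ Real.log ((b - b₀) ^ 2 + (b₀ * c - 1) ^ 2 + c ^ 2 + 1) -
      Real.log |1 - b * c| := by
  have hpos : 0 < |1 - b * c| := abs_pos.mpr h
  have hle : 2 * |1 - b * c| ≤ (b - b₀) ^ 2 + (b₀ * c - 1) ^ 2 + c ^ 2 + 1 := by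
    rcases abs_cases (1 - b * c) with ⟨h1, _⟩ | ⟨h1, _⟩ <;> rw [h1]
    · linarith [sq_nonneg (b - b₀ + c), sq_nonneg (b₀ * c)]
    · linarith [sq_nonneg (b - b₀ - c), sq_nonneg (b₀ * c - 2)]
  have hlog := Real.log_le_log (by positivity) hle
  rw [Real.log_mul two_ne_zero hpos.ne'] at hlog
  linarith

/-- A point with `b * c ≠ 1` where the argument of the first logarithm equals `2 * |1 - b * c|`
is a local minimizer. -/
lemma isLocalMin_objective (b₀ b c : ℝ) (h : 1 - b * c ≠ 0)
    (heq : (b - b₀) ^ 2 + (b₀ * c - 1) ^ 2 + c ^ 2 + 1 = 2 * |1 - b * c|) :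
    IsLocalMin
      (fun p : ℝ × ℝ =>
        Real.log ((p.1 - b₀) ^ 2 + (b₀ * p.2 - 1) ^ 2 + p.2 ^ 2 + 1) -
          Real.log |1 - p.1 * p.2|) (b, c) := by
  have hcont : Continuous fun p : ℝ × ℝ => 1 - p.1 * p.2 := by fun_prop
  filter_upwards [hcont.continuousAt.eventually_ne (x := (b, c)) h] with p hp
  have hval : Real.log ((b - b₀) ^ 2 + (b₀ * c - 1) ^ 2 + c ^ 2 + 1) - Real.log |1 - b * c| =
      Real.log 2 := by
    rw [heq, Real.log_mul two_ne_zero (abs_pos.mpr h).ne']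
    ring
  exact hval.trans_le (log_two_le_objective b₀ p.1 p.2 hp)

/-- For the bivariate likelihood-EV objective
`f(b,c) = log((b − b₀)² + (b₀c − 1)² + c² + 1) − log |1 − bc|`, both `(b₀, 0)`
(the acyclic ground truth) and `((b₀² + 2)/b₀, 2/b₀)` (a cyclic graph) are local
minimizers. -/
theorem likelihood_ev_local_minimizers
    (b₀ : ℝ) (hb₀ : b₀ ≠ 0) :
    IsLocalMin
      (fun p : ℝ × ℝ =>
        Real.log ((p.1 - b₀) ^ 2 + (b₀ * p.2 - 1) ^ 2 + p.2 ^ 2 + 1) -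
          Real.log |1 - p.1 * p.2|) (b₀, 0) ∧
    IsLocalMin
      (fun p : ℝ × ℝ =>
        Real.log ((p.1 - b₀) ^ 2 + (b₀ * p.2 - 1) ^ 2 + p.2 ^ 2 + 1) -
          Real.log |1 - p.1 * p.2|) ((b₀ ^ 2 + 2) / b₀, 2 / b₀) := by
  refine ⟨isLocalMin_objective b₀ _ _ (by simp) (by norm_num), ?_⟩
  have hval : 1 - (b₀ ^ 2 + 2) / b₀ * (2 / b₀) = -(1 + 4 / b₀ ^ 2) := by
    field_simp
    ring
  have hpos : 0 < 1 + 4 / b₀ ^ 2 := by positivity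
  refine isLocalMin_objective b₀ _ _ (hval ▸ neg_ne_zero.mpr hpos.ne') ?_
  rw [hval, abs_neg, abs_of_pos hpos]
  field_simp
  ring
end

section
/- Fix b₀ ≠ 0 and define f(b,c) = log((b − b₀)² + (b₀c − 1)² + c² + 1) − log |1 − bc| on {(b,c) : bc ≠ 1}. Then the stationary point (−2/b₀, 2/b₀) is a saddle point of f: it is neither a local minimum nor a local maximum of f. -/
/-!
Write `Q` for the argument of the first logarithm, `D = 1 - bc` and `R = b₀² + 2`. At the
stationary point `Q = R * D` with `D > 0`, so the value of `f` there is `log R`, and near that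
point `f` lies below (above) `log R` exactly where `Q - R * D` is negative (positive). Since
`Q - R * D` is a quadratic polynomial with a critical zero at the stationary point, it equals its
second-order part there, which factors as `(h + k) (h + (b₀² + 1) k)` in the displacement `(h, k)`
(`num_sub_mul_den`). This form is indefinite because `b₀ ≠ 0`: it is positive along `(1, 0)` and
negative along `(1 + b₀² / 2, -1)`.
-/

open Filter Topology

/-- The quadratic polynomial `Q - R * D`, expanded around the stationary point. -/
lemma num_sub_mul_den (a h k : ℝ) (ha : a ≠ 0) :
    ((-2 / a + h - a) ^ 2 + (a * (2 / a + k) - 1) ^ 2 + (2 / a + k) ^ 2 + 1) -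
      (a ^ 2 + 2) * (1 - (-2 / a + h) * (2 / a + k)) = (h + k) * (h + (a ^ 2 + 1) * k) := by
  field_simp
  ring

lemma value_at_stationary (a : ℝ) (ha : a ≠ 0) :
    Real.log ((-2 / a - a) ^ 2 + (a * (2 / a) - 1) ^ 2 + (2 / a) ^ 2 + 1) -
      Real.log |1 - (-2 / a) * (2 / a)| = Real.log (a ^ 2 + 2) := by
  have hD : 0 < 1 - (-2 / a) * (2 / a) := by
    have : 1 - (-2 / a) * (2 / a) = 1 + (2 / a) ^ 2 := by ring
    rw [this]; positivity
  have hQ := num_sub_mul_den a 0 0 ha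
  simp only [add_zero, mul_zero] at hQ
  rw [abs_of_pos hD, sub_eq_zero.mp hQ, Real.log_mul (by positivity) hD.ne']
  ring

/-- Any property holding eventually near the stationary point holds at some nonzero small
displacement along a given direction, where moreover `1 - bc` is still positive. -/
lemma exists_on_line (a u v : ℝ) {P : ℝ × ℝ → Prop}
    (hP : ∀ᶠ p in 𝓝 ((-2 / a, 2 / a) : ℝ × ℝ), P p) :
    ∃ t : ℝ, t ≠ 0 ∧ 0 < 1 - (-2 / a + t * u) * (2 / a + t * v) ∧
      P (-2 / a + t * u, 2 / a + t * v) := by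
  have hc : Tendsto (fun t : ℝ => ((-2 / a + t * u, 2 / a + t * v) : ℝ × ℝ)) (𝓝 0)
      (𝓝 (-2 / a, 2 / a)) := by
    have : Continuous (fun t : ℝ => ((-2 / a + t * u, 2 / a + t * v) : ℝ × ℝ)) := by fun_prop
    simpa using this.tendsto 0
  have hD : ∀ᶠ p in 𝓝 ((-2 / a, 2 / a) : ℝ × ℝ), 0 < 1 - p.1 * p.2 := by
    have hcont : Continuous (fun p : ℝ × ℝ => 1 - p.1 * p.2) := by fun_prop
    refine hcont.continuousAt.eventually (lt_mem_nhds ?_)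
    have : 1 - (-2 / a) * (2 / a) = 1 + (2 / a) ^ 2 := by ring
    change 0 < 1 - (-2 / a) * (2 / a)
    rw [this]; positivity
  have h := (hc.eventually (hD.and hP)).filter_mono (nhdsWithin_le_nhds (s := {0}ᶜ))
  obtain ⟨t, ht, ht0⟩ := (h.and self_mem_nhdsWithin).exists
  exact ⟨t, ht0, ht.1, ht.2⟩

/-- For the bivariate likelihood-EV objective
`f(b,c) = log((b − b₀)² + (b₀c − 1)² + c² + 1) − log |1 − bc|`, the stationary
point `(−2/b₀, 2/b₀)` is a saddle point: neither a local minimum nor a local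
maximum of `f`. -/
theorem likelihood_ev_saddle_point
    (b₀ : ℝ) (hb₀ : b₀ ≠ 0) :
    ¬ IsLocalMin
        (fun p : ℝ × ℝ =>
          Real.log ((p.1 - b₀) ^ 2 + (b₀ * p.2 - 1) ^ 2 + p.2 ^ 2 + 1) -
            Real.log |1 - p.1 * p.2|) (-2 / b₀, 2 / b₀) ∧
    ¬ IsLocalMax
        (fun p : ℝ × ℝ =>
          Real.log ((p.1 - b₀) ^ 2 + (b₀ * p.2 - 1) ^ 2 + p.2 ^ 2 + 1) -
            Real.log |1 - p.1 * p.2|) (-2 / b₀, 2 / b₀) := by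
  constructor
  · intro h
    obtain ⟨t, ht, hD, hle⟩ := exists_on_line b₀ (1 + b₀ ^ 2 / 2) (-1) h
    have hq := num_sub_mul_den b₀ (t * (1 + b₀ ^ 2 / 2)) (t * (-1)) hb₀
    simp only [value_at_stationary b₀ hb₀, abs_of_pos hD] at hle
    have hneg : (t * (1 + b₀ ^ 2 / 2) + t * (-1)) *
        (t * (1 + b₀ ^ 2 / 2) + (b₀ ^ 2 + 1) * (t * (-1))) < 0 := by
      have h1 : (t * (1 + b₀ ^ 2 / 2) + t * (-1)) *
          (t * (1 + b₀ ^ 2 / 2) + (b₀ ^ 2 + 1) * (t * (-1))) = -(t * b₀ ^ 2 / 2) ^ 2 := by ring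
      rw [h1, neg_lt_zero]
      positivity
    have hlt := Real.log_lt_log (by positivity) (sub_neg.mp (hq.trans_lt hneg))
    rw [Real.log_mul (by positivity) hD.ne'] at hlt
    linarith
  · intro h
    obtain ⟨t, ht, hD, hle⟩ := exists_on_line b₀ 1 0 h
    have hq := num_sub_mul_den b₀ (t * 1) (t * 0) hb₀
    simp only [value_at_stationary b₀ hb₀, abs_of_pos hD] at hle
    have hpos : 0 < (t * 1 + t * 0) * (t * 1 + (b₀ ^ 2 + 1) * (t * 0)) := by
      have h1 : (t * 1 + t * 0) * (t * 1 + (b₀ ^ 2 + 1) * (t * 0)) = t ^ 2 := by ring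
      rw [h1]
      positivity
    have hlt := Real.log_lt_log (mul_pos (by positivity) hD) (sub_pos.mp (hq ▸ hpos))
    rw [Real.log_mul (by positivity) hD.ne'] at hlt
    linarith
end
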